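/- Under the same hypotheses (commuting pairs (H₁⁰,H₂⁰), (H₁,H₂) with Hilbert–Schmidt differences V_j = H_j − H_j⁰, and finite-dimensional approximants P_N⁰, H_j^{0(N)}, P_N, H_j^{(N)} from the Weyl–von Neumann–Berg construction), for j = 1,2 and every integer k ≥ 1: ‖(H_j⁰)^k P_N⁰ − (P_N⁰ H_j⁰ P_N⁰)^k‖₂ → 0 and ‖(H_j)^k P_N − (P_N H_j P_N)^k‖₂ → 0 as N → ∞. -/

import Mathlib

open MeasureTheory Filter Topology

noncomputable section

/-- The trace computed along a Hilbert basis: `Tr T = Σ_i ⟪b i, T (b i)⟫`. -/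
def traceAlong {H : Type*} [NormedAddCommGroup H] [InnerProductSpace ℂ H] [CompleteSpace H]
    {ι : Type*} (b : HilbertBasis ι ℂ H) (T : H →L[ℂ] H) : ℂ :=
  ∑' i, (inner ℂ (b i) (T (b i)) : ℂ)

/-- The Schatten `p`-norm `‖T‖_p = (Tr |T|^p)^{1/p}`, via the functional calculus
`|T|^p = f(T*T)`, `f(t) = |t|^{p/2}`, with the trace computed along the basis `b`. -/
def schattenNorm {H : Type*} [NormedAddCommGroup H] [InnerProductSpace ℂ H] [CompleteSpace H]
    {ι : Type*} (b : HilbertBasis ι ℂ H) (p : ℝ) (T : H →L[ℂ] H) : ℝ :=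
  (∑' i, (inner ℂ (b i)
      ((cfc (fun t : ℝ => |t| ^ (p / 2)) (ContinuousLinearMap.adjoint T * T)) (b i)) : ℂ).re)
    ^ (1 / p)

namespace HSaux

variable {H : Type*} [NormedAddCommGroup H] [InnerProductSpace ℂ H] [CompleteSpace H]

/-- Squared Hilbert–Schmidt norm, valued in extended nonnegative reals. -/
def hs (b : HilbertBasis ℕ ℂ H) (T : H →L[ℂ] H) : ENNReal :=
  ∑' i, ENNReal.ofReal (‖T (b i)‖ ^ 2)

lemma schatten_two (b : HilbertBasis ℕ ℂ H) (T : H →L[ℂ] H) :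
    schattenNorm b 2 T = Real.sqrt (hs b T).toReal := by
  have hpos : 0 ≤ ContinuousLinearMap.adjoint T * T := star_mul_self_nonneg T
  have hcfc : cfc (fun t : ℝ => |t| ^ ((2 : ℝ) / 2)) (ContinuousLinearMap.adjoint T * T)
      = ContinuousLinearMap.adjoint T * T := by
    have hsa : IsSelfAdjoint (ContinuousLinearMap.adjoint T * T) := IsSelfAdjoint.of_nonneg hpos
    conv_rhs => rw [← cfc_id ℝ (ContinuousLinearMap.adjoint T * T) hsa]
    apply cfc_congr
    intro t ht
    have h0 : 0 ≤ t := spectrum_nonneg_of_nonneg hpos ht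
    simp [abs_of_nonneg h0]
  unfold schattenNorm hs
  rw [hcfc, ENNReal.tsum_toReal_eq (fun i => ENNReal.ofReal_ne_top), Real.sqrt_eq_rpow]
  congr 1
  apply tsum_congr
  intro i
  rw [ENNReal.toReal_ofReal (by positivity)]
  rw [mul_apply_eq_comp, ContinuousLinearMap.adjoint_inner_right]
  rw [inner_self_eq_norm_sq_to_K]
  norm_cast

lemma parseval (b : HilbertBasis ℕ ℂ H) (x : H) :
    ∑' i, ENNReal.ofReal (‖(inner ℂ (b i) x : ℂ)‖ ^ 2) = ENNReal.ofReal (‖x‖ ^ 2) := by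
  have h := b.hasSum_inner_mul_inner x x
  have h' : HasSum (fun i => ‖(inner ℂ (b i) x : ℂ)‖ ^ 2) (‖x‖ ^ 2) := by
    rw [← Complex.hasSum_ofReal]
    convert h using 1
    · rfl
    · funext i
      rw [← inner_conj_symm x (b i), Complex.conj_mul']
      push_cast
      rfl
    · rw [inner_self_eq_norm_sq_to_K]
      push_cast
      rfl
  rw [← ENNReal.ofReal_tsum_of_nonneg (fun _ => by positivity) h'.summable, h'.tsum_eq]

lemma hs_adjoint (b : HilbertBasis ℕ ℂ H) (T : H →L[ℂ] H) :
    hs b (ContinuousLinearMap.adjoint T) = hs b T := by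
  unfold hs
  simp_rw [← parseval b]
  rw [ENNReal.tsum_comm]
  refine tsum_congr fun i => tsum_congr fun j => ?_
  rw [ContinuousLinearMap.adjoint_inner_right, norm_inner_symm]

lemma hs_mul_left (b : HilbertBasis ℕ ℂ H) (X T : H →L[ℂ] H) :
    hs b (X * T) ≤ ENNReal.ofReal (‖X‖ ^ 2) * hs b T := by
  unfold hs
  rw [← ENNReal.tsum_mul_left]
  refine ENNReal.tsum_le_tsum fun i => ?_
  rw [← ENNReal.ofReal_mul (by positivity), ← mul_pow]
  apply ENNReal.ofReal_le_ofReal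
  gcongr
  exact X.le_opNorm _

lemma hs_mul_right (b : HilbertBasis ℕ ℂ H) (T X : H →L[ℂ] H) :
    hs b (T * X) ≤ ENNReal.ofReal (‖X‖ ^ 2) * hs b T := by
  have h := hs_mul_left b (ContinuousLinearMap.adjoint X) (ContinuousLinearMap.adjoint T)
  have e : ContinuousLinearMap.adjoint X * ContinuousLinearMap.adjoint T
      = ContinuousLinearMap.adjoint (T * X) := (star_mul T X).symm
  rwa [e, hs_adjoint, hs_adjoint, LinearIsometryEquiv.norm_map] at h

lemma hs_add (b : HilbertBasis ℕ ℂ H) (S T : H →L[ℂ] H) :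
    hs b (S + T) ≤ 2 * hs b S + 2 * hs b T := by
  unfold hs
  rw [← ENNReal.tsum_mul_left, ← ENNReal.tsum_mul_left, ← ENNReal.tsum_add]
  refine ENNReal.tsum_le_tsum fun i => ?_
  have h2 : (2 : ENNReal) = ENNReal.ofReal 2 := by simp
  rw [h2, ← ENNReal.ofReal_mul (by positivity), ← ENNReal.ofReal_mul (by positivity),
    ← ENNReal.ofReal_add (by positivity) (by positivity)]
  apply ENNReal.ofReal_le_ofReal
  have h := norm_add_le (S (b i)) (T (b i))
  rw [add_apply]
  nlinarith [norm_nonneg (S (b i) + T (b i)), sq_nonneg (‖S (b i)‖ - ‖T (b i)‖),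
    norm_nonneg (S (b i)), norm_nonneg (T (b i))]

lemma hs_neg (b : HilbertBasis ℕ ℂ H) (T : H →L[ℂ] H) : hs b (-T) = hs b T := by
  simp [hs]

lemma hs_proj (b : HilbertBasis ℕ ℂ H) (P : H →L[ℂ] H)
    (hfin : FiniteDimensional ℂ (LinearMap.range (P : H →ₗ[ℂ] H))) : hs b P < ⊤ := by
  set W := LinearMap.range (P : H →ₗ[ℂ] H)
  let e := stdOrthonormalBasis ℂ W
  have key : ∀ i, ENNReal.ofReal (‖P (b i)‖ ^ 2) = ∑ j, ENNReal.ofReal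
      (‖(inner ℂ (b i) (ContinuousLinearMap.adjoint P (e j : H)) : ℂ)‖ ^ 2) := by
    intro i
    rw [← ENNReal.ofReal_sum_of_nonneg (fun _ _ => by positivity)]
    congr 1
    have hm : P (b i) ∈ W := ⟨b i, rfl⟩
    have h := e.sum_sq_norm_inner_right ⟨P (b i), hm⟩
    rw [Submodule.coe_norm] at h
    simp only at h
    rw [← h]
    refine Finset.sum_congr rfl fun j _ => ?_
    rw [ContinuousLinearMap.adjoint_inner_right, norm_inner_symm, Submodule.coe_inner]
  unfold hs
  simp_rw [key]
  rw [Summable.tsum_finsetSum (fun _ _ => ENNReal.summable)]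
  simp_rw [parseval b]
  exact ENNReal.sum_lt_top.2 fun _ _ => ENNReal.ofReal_lt_top

lemma norm_proj_le (P : H →L[ℂ] H) (h : P * P = P) (hsa : IsSelfAdjoint P) : ‖P‖ ≤ 1 := by
  have h1 : ‖P‖ * ‖P‖ = ‖P‖ := by
    have := CStarRing.norm_star_mul_self (x := P)
    rw [hsa.star_eq, h] at this
    exact this.symm
  nlinarith [norm_nonneg P]

lemma main (b : HilbertBasis ℕ ℂ H) (A : H →L[ℂ] H) (P : ℕ → H →L[ℂ] H)
    (hproj : ∀ N, P N * P N = P N) (hsa : ∀ N, IsSelfAdjoint (P N))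
    (hfin : ∀ N, FiniteDimensional ℂ (LinearMap.range (P N : H →ₗ[ℂ] H)))
    (hlim : Tendsto (fun N => schattenNorm b 2 (A * P N - P N * A)) atTop (𝓝 0))
    (k : ℕ) (hk : 1 ≤ k) :
    Tendsto (fun N => schattenNorm b 2 (A ^ k * P N - (P N * A * P N) ^ k)) atTop (𝓝 0) := by
  have hCfin : ∀ N, hs b (A * P N - P N * A) ≠ ⊤ := by
    intro N
    have hP := hs_proj b (P N) (hfin N)
    rw [sub_eq_add_neg]
    refine ne_top_of_le_ne_top ?_ (hs_add b _ _)
    rw [hs_neg]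
    have h1 := (hs_mul_left b A (P N)).trans_lt (ENNReal.mul_lt_top ENNReal.ofReal_lt_top hP)
    have h2 := (hs_mul_right b (P N) A).trans_lt (ENNReal.mul_lt_top ENNReal.ofReal_lt_top hP)
    exact ENNReal.add_ne_top.2 ⟨ENNReal.mul_ne_top (by simp) h1.ne,
      ENNReal.mul_ne_top (by simp) h2.ne⟩
  have hC : Tendsto (fun N => hs b (A * P N - P N * A)) atTop (𝓝 0) := by
    rw [← ENNReal.tendsto_toReal_iff hCfin (by simp)]
    have := hlim.pow 2
    simp_rw [schatten_two, Real.sq_sqrt ENNReal.toReal_nonneg] at this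
    simpa using this
  have hCX : ∀ (X : ℕ → H →L[ℂ] H) (M : ℝ), (∀ N, ‖X N‖ ≤ M) →
      Tendsto (fun N => hs b ((A * P N - P N * A) * X N)) atTop (𝓝 0) := by
    intro X M hX
    have hz : Tendsto (fun N => ENNReal.ofReal (M ^ 2) * hs b (A * P N - P N * A))
        atTop (𝓝 0) := by
      simpa using ENNReal.Tendsto.const_mul hC (Or.inr ENNReal.ofReal_ne_top)
    refine tendsto_of_tendsto_of_tendsto_of_le_of_le tendsto_const_nhds hz
      (fun _ => bot_le) (fun N => (hs_mul_right b _ _).trans ?_)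
    have := hX N
    gcongr
  have hP1 : ∀ N, ‖P N‖ ≤ 1 := fun N => norm_proj_le _ (hproj N) (hsa N)
  have hQ : ∀ N, ‖P N * A * P N‖ ≤ ‖A‖ := by
    intro N
    calc ‖P N * A * P N‖ ≤ ‖P N‖ * ‖A‖ * ‖P N‖ :=
          (norm_mul_le _ _).trans (by gcongr; exact norm_mul_le _ _)
      _ ≤ 1 * ‖A‖ * 1 := by gcongr <;> exact hP1 N
      _ = ‖A‖ := by ring
  have hD : Tendsto (fun N => hs b (A ^ k * P N - (P N * A * P N) ^ k)) atTop (𝓝 0) := by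
    induction k, hk using Nat.le_induction with
    | base =>
      refine (hCX P 1 hP1).congr fun N => ?_
      congr 1
      rw [pow_one, pow_one, sub_mul, mul_assoc A, hproj]
    | succ n hn ih =>
      have e : ∀ N, A ^ (n + 1) * P N - (P N * A * P N) ^ (n + 1)
          = A * (A ^ n * P N - (P N * A * P N) ^ n)
            + (A * P N - P N * A) * (P N * A * P N) ^ n := by
        intro N
        have hl : P N * (P N * A * P N) ^ n = (P N * A * P N) ^ n := by
          obtain ⟨m, rfl⟩ : ∃ m, n = m + 1 := ⟨n - 1, by omega⟩
          rw [pow_succ', ← mul_assoc, ← mul_assoc, ← mul_assoc, hproj]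
        have hr : (P N * A * P N) ^ (n + 1) = P N * A * (P N * A * P N) ^ n := by
          rw [pow_succ', mul_assoc (P N * A), hl]
        rw [hr, mul_sub, sub_mul, mul_assoc A (P N), hl, pow_succ', mul_assoc A]
        abel
      have hz : Tendsto (fun N => 2 * (ENNReal.ofReal (‖A‖ ^ 2) *
          hs b (A ^ n * P N - (P N * A * P N) ^ n)) +
          2 * hs b ((A * P N - P N * A) * (P N * A * P N) ^ n)) atTop (𝓝 0) := by
        have h1 := ENNReal.Tendsto.const_mul (a := 2) (ENNReal.Tendsto.const_mul ih
          (Or.inr (ENNReal.ofReal_ne_top (r := ‖A‖ ^ 2)))) (Or.inr (by simp))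
        have h2 := ENNReal.Tendsto.const_mul (a := 2)
          (hCX (fun N => (P N * A * P N) ^ n) (‖A‖ ^ n)
            (fun N => (norm_pow_le' _ (by omega)).trans (by gcongr; exact hQ N)))
          (Or.inr (by simp))
        simpa using h1.add h2
      refine tendsto_of_tendsto_of_tendsto_of_le_of_le tendsto_const_nhds hz
        (fun _ => bot_le) (fun N => ?_)
      simp only [e]
      refine (hs_add b _ _).trans ?_
      gcongr
      exact hs_mul_left b _ _
  simp_rw [schatten_two]
  have h := (ENNReal.tendsto_toReal (by simp)).comp hD
  have h' := (Real.continuous_sqrt.tendsto _).comp h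
  simpa [Function.comp_def] using h'

end HSaux

/-- Under the same hypotheses, for `j = 1,2` and every `k ≥ 1`:
`‖(H_j⁰)^k P_N⁰ − (P_N⁰H_j⁰P_N⁰)^k‖₂ → 0` and `‖(H_j)^k P_N − (P_N H_j P_N)^k‖₂ → 0`. -/
theorem stmt14
 {H : Type*} [NormedAddCommGroup H] [InnerProductSpace ℂ H] [CompleteSpace H]
    [TopologicalSpace.SeparableSpace H]
    (b : HilbertBasis ℕ ℂ H)
    (H10 H20 H1 H2 : H →L[ℂ] H)
    (h10sa : IsSelfAdjoint H10) (h20sa : IsSelfAdjoint H20)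
    (h1sa : IsSelfAdjoint H1) (h2sa : IsSelfAdjoint H2)
    (hcomm0 : Commute H10 H20) (hcomm : Commute H1 H2)
    (hV1 : Summable fun i => ‖(H1 - H10) (b i)‖ ^ 2)
    (hV2 : Summable fun i => ‖(H2 - H20) (b i)‖ ^ 2)
    (P0 P : ℕ → H →L[ℂ] H)
    (hP0proj : ∀ N, P0 N * P0 N = P0 N) (hP0sa : ∀ N, IsSelfAdjoint (P0 N))
    (hP0fin : ∀ N, FiniteDimensional ℂ (LinearMap.range (P0 N : H →ₗ[ℂ] H)))
    (hP0mono : ∀ N, LinearMap.range (P0 N : H →ₗ[ℂ] H)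
      ≤ LinearMap.range (P0 (N + 1) : H →ₗ[ℂ] H))
    (hP0lim : ∀ x : H, Tendsto (fun N => P0 N x) atTop (𝓝 x))
    (hPproj : ∀ N, P N * P N = P N) (hPsa : ∀ N, IsSelfAdjoint (P N))
    (hPfin : ∀ N, FiniteDimensional ℂ (LinearMap.range (P N : H →ₗ[ℂ] H)))
    (hPmono : ∀ N, LinearMap.range (P N : H →ₗ[ℂ] H)
      ≤ LinearMap.range (P (N + 1) : H →ₗ[ℂ] H))
    (hPlim : ∀ x : H, Tendsto (fun N => P N x) atTop (𝓝 x))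
    (H10N H20N H1N H2N : ℕ → H →L[ℂ] H)
    (h10Nsa : ∀ N, IsSelfAdjoint (H10N N)) (h20Nsa : ∀ N, IsSelfAdjoint (H20N N))
    (h1Nsa : ∀ N, IsSelfAdjoint (H1N N)) (h2Nsa : ∀ N, IsSelfAdjoint (H2N N))
    (hcomm0N : ∀ N, Commute (H10N N) (H20N N)) (hcommN : ∀ N, Commute (H1N N) (H2N N))
    (hsub0 : ∀ N, P0 N * H10N N * P0 N = H10N N * P0 N
      ∧ P0 N * H20N N * P0 N = H20N N * P0 N)
    (hsub : ∀ N, P N * H1N N * P N = H1N N * P N ∧ P N * H2N N * P N = H2N N * P N)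
    (happrox0 : ∀ p : ℝ, 2 ≤ p →
      Tendsto (fun N => schattenNorm b p (H10 * P0 N - P0 N * H10)) atTop (𝓝 0) ∧
      Tendsto (fun N => schattenNorm b p (H20 * P0 N - P0 N * H20)) atTop (𝓝 0) ∧
      Tendsto (fun N => schattenNorm b p (P0 N * H10 * P0 N - H10N N * P0 N)) atTop (𝓝 0) ∧
      Tendsto (fun N => schattenNorm b p (P0 N * H20 * P0 N - H20N N * P0 N)) atTop (𝓝 0))
    (happrox : ∀ p : ℝ, 2 ≤ p →
      Tendsto (fun N => schattenNorm b p (H1 * P N - P N * H1)) atTop (𝓝 0) ∧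
      Tendsto (fun N => schattenNorm b p (H2 * P N - P N * H2)) atTop (𝓝 0) ∧
      Tendsto (fun N => schattenNorm b p (P N * H1 * P N - H1N N * P N)) atTop (𝓝 0) ∧
      Tendsto (fun N => schattenNorm b p (P N * H2 * P N - H2N N * P N)) atTop (𝓝 0))
    : ∀ k : ℕ, 1 ≤ k →
      Tendsto (fun N => schattenNorm b 2 (H10 ^ k * P0 N - (P0 N * H10 * P0 N) ^ k))
        atTop (𝓝 0) ∧
      Tendsto (fun N => schattenNorm b 2 (H20 ^ k * P0 N - (P0 N * H20 * P0 N) ^ k))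
        atTop (𝓝 0) ∧
      Tendsto (fun N => schattenNorm b 2 (H1 ^ k * P N - (P N * H1 * P N) ^ k))
        atTop (𝓝 0) ∧
      Tendsto (fun N => schattenNorm b 2 (H2 ^ k * P N - (P N * H2 * P N) ^ k))
        atTop (𝓝 0) := by
  intro k hk
  obtain ⟨a1, a2, -, -⟩ := happrox0 2 le_rfl
  obtain ⟨c1, c2, -, -⟩ := happrox 2 le_rfl
  exact ⟨HSaux.main b H10 P0 hP0proj hP0sa hP0fin a1 k hk,
    HSaux.main b H20 P0 hP0proj hP0sa hP0fin a2 k hk,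
    HSaux.main b H1 P hPproj hPsa hPfin c1 k hk,
    HSaux.main b H2 P hPproj hPsa hPfin c2 k hk⟩

end
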